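/- Let N ≥ 1 and let G = (g_{ij}) be a symmetric (N+1)×(N+1) real matrix indexed by {0,1,…,N} with g_{ii} = 1 for all i, such that for each i ∈ {1,…,N} there is an integer m_i ≥ 1 with g_{0i} = −cos(π/(2 m_i)). Assume that every cyclic product of the matrix 2G is an algebraic integer. Let G' = (g'_{ij})_{i,j=1}^N be defined by g'_{ij} = (g_{ij} − g_{0i} g_{0j})/√((1 − g_{0i}^2)(1 − g_{0j}^2)). Then every cyclic product of the matrix 2G' is an algebraic integer. -/

import Mathlib

/-- The set of cyclic products of a square matrix `A`: all products of the form
`a_{i₁ i₂} a_{i₂ i₃} ⋯ a_{iₛ i₁}` with `s ≥ 1`. -/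
def cycProd {R : Type*} [CommRing R] {I : Type*} (A : Matrix I I R) : Set R :=
  {x | ∃ (s : ℕ) (idx : ℕ → I), 1 ≤ s ∧
    x = ∏ k ∈ Finset.range s, A (idx k) (idx ((k + 1) % s))}

/-!
Divided by `sin θᵢ sin θⱼ`, the identity `2gᵢⱼ - 2g₀ᵢg₀ⱼ = (2gᵢⱼ) - (2gᵢ₀)(2g₀ⱼ) / 2` makes an entry
of `2G'` a combination of the weights of the walks `i → j` and `i → 0 → j` for `2G`. Expanding a
cyclic product of `2G'` therefore yields closed walks for `2G`, and it remains to see that the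
coefficients are algebraic integers. For `θ = π / (2m)` these are built from `1 / sin θ` and, when
`cos θ ≠ 0`, `1 / (√2 sin θ)`; both reduce to quotients `sin (nφ) / sin φ`, which are polynomials in
`2 cos φ` with integer coefficients.
-/

section Walks

variable {R I J : Type*} [CommRing R] {A : Matrix I I R} {i j k : I} {v w : R}

theorem mem_cycProd_iff {x : R} : x ∈ cycProd A ↔ ∃ (n : ℕ) (f : ℕ → I), 1 ≤ n ∧ f n = f 0 ∧
    x = ∏ k ∈ Finset.range n, A (f k) (f (k + 1)) := by
  constructor
  · rintro ⟨n, f, hn, rfl⟩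
    refine ⟨n, fun k ↦ f (k % n), hn, by simp, Finset.prod_congr rfl fun k hk ↦ ?_⟩
    simp only [Nat.mod_eq_of_lt (Finset.mem_range.1 hk)]
  · rintro ⟨n, f, hn, hclosed, rfl⟩
    refine ⟨n, f, hn, Finset.prod_congr rfl fun k hk ↦ ?_⟩
    obtain hlt | rfl := Nat.lt_or_eq_of_le (Finset.mem_range.1 hk)
    · rw [Nat.mod_eq_of_lt hlt]
    · rw [Nat.mod_self, hclosed]

/-- `IsWalkWeight A i j w` says that `w` is the product of the entries of `A` along some walk from
`i` to `j`. Unlike a cyclic product, a closed walk may have length zero. -/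
inductive IsWalkWeight (A : Matrix I I R) : I → I → R → Prop
  | nil (i : I) : IsWalkWeight A i i 1
  | cons (i : I) {j k : I} {w : R} (h : IsWalkWeight A j k w) : IsWalkWeight A i k (A i j * w)

theorem IsWalkWeight.mul (hv : IsWalkWeight A i j v) (hw : IsWalkWeight A j k w) :
    IsWalkWeight A i k (v * w) := by
  induction hv with
  | nil => rwa [one_mul]
  | cons i _ ih => rw [mul_assoc]; exact .cons i (ih hw)

theorem IsWalkWeight.exists_eq_prod (h : IsWalkWeight A i j w) :
    ∃ (n : ℕ) (f : ℕ → I), f 0 = i ∧ f n = j ∧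
      w = ∏ k ∈ Finset.range n, A (f k) (f (k + 1)) := by
  induction h with
  | nil i => exact ⟨0, fun _ ↦ i, rfl, rfl, rfl⟩
  | cons i _ ih =>
    obtain ⟨n, f, rfl, hn, rfl⟩ := ih
    exact ⟨n + 1, fun k ↦ Nat.casesOn k i f, rfl, hn, by
      rw [Finset.prod_range_succ', mul_comm]; rfl⟩

theorem IsWalkWeight.mem_of_cycProd_subset {O : Subring R} (hA : cycProd A ⊆ O)
    (h : IsWalkWeight A i i w) : w ∈ O := by
  obtain ⟨n, f, h0, hn, rfl⟩ := h.exists_eq_prod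
  obtain rfl | hpos := n.eq_zero_or_pos
  · exact O.one_mem
  · exact hA (mem_cycProd_iff.2 ⟨n, f, hpos, hn.trans h0.symm, rfl⟩)

/-- The `O`-linear combinations of the weights of walks from `i` to `j`. These modules contain
everything obtained by expanding products along walks, whether or not the walks are closed. -/
def walkSpan (O : Subring R) (A : Matrix I I R) (i j : I) : Submodule O R :=
  Submodule.span O {w | IsWalkWeight A i j w}

variable {O : Subring R}

theorem one_mem_walkSpan (i : I) : 1 ∈ walkSpan O A i i :=
  Submodule.subset_span (.nil i)

theorem apply_mem_walkSpan (i j : I) : A i j ∈ walkSpan O A i j := by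
  have hedge : IsWalkWeight A i j (A i j * 1) := .cons i (.nil j)
  rw [mul_one] at hedge
  exact Submodule.subset_span hedge

theorem mul_mem_walkSpan (hv : v ∈ walkSpan O A i j) (hw : w ∈ walkSpan O A j k) :
    v * w ∈ walkSpan O A i k := by
  have hmul := Submodule.mul_mem_mul hv hw
  rw [walkSpan, walkSpan, Submodule.span_mul_span] at hmul
  refine Submodule.span_mono ?_ hmul
  rintro _ ⟨a, ha, b, hb, rfl⟩
  exact IsWalkWeight.mul ha hb

theorem mem_of_mem_walkSpan_self (hA : cycProd A ⊆ O) (hw : w ∈ walkSpan O A i i) : w ∈ O := by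
  induction hw using Submodule.span_induction with
  | mem w hw => exact IsWalkWeight.mem_of_cycProd_subset hA hw
  | zero => exact O.zero_mem
  | add v w _ _ hv hw => exact O.add_mem hv hw
  | smul a w _ hw => exact O.mul_mem a.2 hw

theorem cycProd_subset_of_mem_walkSpan (hA : cycProd A ⊆ O) {B : Matrix J J R} (e : J → I)
    (hB : ∀ i j, B i j ∈ walkSpan O A (e i) (e j)) : cycProd B ⊆ O := by
  intro x hx
  obtain ⟨n, f, -, hclosed, rfl⟩ := mem_cycProd_iff.1 hx
  have hwalk (l : ℕ) :
      ∏ k ∈ Finset.range l, B (f k) (f (k + 1)) ∈ walkSpan O A (e (f 0)) (e (f l)) := by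
    induction l with
    | zero => exact one_mem_walkSpan _
    | succ l ih => rw [Finset.prod_range_succ]; exact mul_mem_walkSpan ih (hB _ _)
  have hn := hwalk n
  rw [hclosed] at hn
  exact mem_of_mem_walkSpan_self hA hn

end Walks

section Projection

open Real

variable {I J : Type*} {G : Matrix I I ℝ} {o : I} {e : J → I} {θ : J → ℝ}

/-- The Gram matrix of the normalized projections of the vectors indexed by `e j` onto the
orthogonal complement of the vector indexed by `o`, where `G` is the Gram matrix of a family of unit
vectors. The junk value `0` appears where `(1 - (G o (e i)) ^ 2) * (1 - (G o (e j)) ^ 2)` is not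
positive. -/
noncomputable def projectedGram (G : Matrix I I ℝ) (o : I) (e : J → I) : Matrix J J ℝ :=
  .of fun i j ↦ (G (e i) (e j) - G o (e i) * G o (e j)) /
    √((1 - (G o (e i)) ^ 2) * (1 - (G o (e j)) ^ 2))

theorem projectedGram_apply_of_eq_neg_cos (hcos : ∀ j, G o (e j) = -cos (θ j))
    (hsin : ∀ j, 0 ≤ sin (θ j)) (i j : J) :
    projectedGram G o e i j =
      (G (e i) (e j) - cos (θ i) * cos (θ j)) / (sin (θ i) * sin (θ j)) := by
  simp only [projectedGram, Matrix.of_apply, hcos, neg_sq, neg_mul_neg, ← sin_sq, ← mul_pow,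
    sqrt_sq (mul_nonneg (hsin i) (hsin j))]

theorem cycProd_two_smul_projectedGram_subset {O : Subring ℝ}
    (hsymm : ∀ j, G (e j) o = G o (e j)) (hcos : ∀ j, G o (e j) = -cos (θ j))
    (hsin : ∀ j, 0 ≤ sin (θ j)) (hinv : ∀ j, (sin (θ j))⁻¹ ∈ O)
    (hinv_sqrt_two : ∀ j, cos (θ j) = 0 ∨ (√2 * sin (θ j))⁻¹ ∈ O)
    (hG : cycProd ((2 : ℝ) • G) ⊆ O) :
    cycProd ((2 : ℝ) • projectedGram G o e) ⊆ O := by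
  refine cycProd_subset_of_mem_walkSpan hG e fun i j ↦ ?_
  set A : Matrix I I ℝ := (2 : ℝ) • G with hA
  obtain ⟨c, hc, hentry⟩ : ∃ c ∈ O, ((2 : ℝ) • projectedGram G o e) i j =
      (sin (θ i))⁻¹ * (sin (θ j))⁻¹ * A (e i) (e j) - c * (A (e i) o * A o (e j)) := by
    simp only [hA, Matrix.smul_apply, smul_eq_mul, projectedGram_apply_of_eq_neg_cos hcos hsin,
      hsymm, hcos]
    by_cases hzero : cos (θ i) * cos (θ j) = 0
    · refine ⟨0, O.zero_mem, ?_⟩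
      rw [hzero]
      ring
    · obtain ⟨hi, hj⟩ := mul_ne_zero_iff.1 hzero
      refine ⟨_, O.mul_mem ((hinv_sqrt_two i).resolve_left hi) ((hinv_sqrt_two j).resolve_left hj),
        ?_⟩
      have hsq : (√2)⁻¹ ^ 2 = (2 : ℝ)⁻¹ := by rw [inv_pow, sq_sqrt zero_le_two]
      linear_combination 4 * cos (θ i) * cos (θ j) * (sin (θ i))⁻¹ * (sin (θ j))⁻¹ * hsq
  rw [hentry]
  have hdirect := (walkSpan O A (e i) (e j)).smul_mem
    (⟨_, O.mul_mem (hinv i) (hinv j)⟩ : O) (apply_mem_walkSpan _ _)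
  have hdetour := (walkSpan O A (e i) (e j)).smul_mem
    (⟨c, hc⟩ : O) (mul_mem_walkSpan (apply_mem_walkSpan _ o) (apply_mem_walkSpan o _))
  exact sub_mem hdirect hdetour

end Projection

section Trigonometry

open Real

theorem isIntegral_sin_int_mul_div_sin {R : Type*} [CommRing R] [Algebra R ℝ] {φ : ℝ}
    (hφ : IsIntegral R (2 * cos φ)) (n : ℤ) : IsIntegral R (sin (n * φ) / sin φ) := by
  obtain hsin | hsin := eq_or_ne (sin φ) 0
  · rw [hsin, div_zero]
    exact isIntegral_zero
  · have hS : (Polynomial.Chebyshev.S ℝ (n - 1)).eval (2 * cos φ) = sin (n * φ) / sin φ := by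
      rw [eq_div_iff hsin, Polynomial.Chebyshev.S_two_mul_real_cos]
      simp only [Int.cast_sub, Int.cast_one, sub_add_cancel]
    rw [← hS, ← Polynomial.Chebyshev.aeval_S (R := R)]
    exact adjoin_le_integralClosure hφ (Polynomial.aeval_mem_adjoin_singleton R _)

variable {m : ℕ}

theorem sin_pi_div_two_mul_nonneg (hm : m ≠ 0) : 0 ≤ sin (π / (2 * m)) := by
  have hone : (1 : ℝ) ≤ 2 * m := by exact_mod_cast (by lia : 1 ≤ 2 * m)
  exact sin_nonneg_of_nonneg_of_le_pi (by positivity) (div_le_self pi_nonneg hone)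

theorem isIntegral_two_mul_cos_pi_div (n : ℕ) : IsIntegral ℤ (2 * cos (π / n)) := by
  have h := isIntegral_two_mul_cos_rat_mul_pi (1 / n)
  rwa [Rat.cast_div, Rat.cast_one, Rat.cast_natCast, one_div_mul_eq_div] at h

theorem isIntegral_sin_int_mul_pi_div_div_sin (n : ℕ) (k : ℤ) :
    IsIntegral ℤ (sin (k * (π / n)) / sin (π / n)) :=
  isIntegral_sin_int_mul_div_sin (isIntegral_two_mul_cos_pi_div n) k

theorem isIntegral_inv_sin_pi_div_two_mul (hm : m ≠ 0) : IsIntegral ℤ (sin (π / (2 * m)))⁻¹ := by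
  have hangle : m * (π / (2 * m)) = π / 2 := by field_simp
  have h := isIntegral_sin_int_mul_pi_div_div_sin (2 * m) m
  push_cast at h
  rwa [hangle, sin_pi_div_two, one_div] at h

theorem isIntegral_inv_sqrt_two_mul_sin_pi_div_two_mul_of_even (hm : m ≠ 0) (heven : Even m) :
    IsIntegral ℤ (√2 * sin (π / (2 * m)))⁻¹ := by
  obtain ⟨k, rfl⟩ := even_iff_exists_two_mul.1 heven
  have hk : (k : ℝ) ≠ 0 := by exact_mod_cast right_ne_zero_of_mul hm
  have hangle : k * (π / (2 * (2 * k))) = π / 4 := by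
    field_simp
    norm_num
  have h := isIntegral_sin_int_mul_pi_div_div_sin (2 * (2 * k)) k
  push_cast at h ⊢
  rwa [hangle, sin_pi_div_four, ← inv_inv (√2 / 2), inv_div, div_sqrt, inv_div_left,
    mul_comm] at h

theorem isIntegral_inv_two_mul_sin_pi_div_two_mul_of_odd (hodd : Odd m)
    (hcos : cos (π / (2 * m)) ≠ 0) : IsIntegral ℤ (2 * sin (π / (2 * m)))⁻¹ := by
  obtain ⟨k, hk⟩ := hodd
  have hdouble : π / m = 2 * (π / (2 * m)) := by ring
  have hangle : k * (π / m) = π / 2 - π / (2 * m) := by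
    have hm : (m : ℝ) = 2 * k + 1 := by exact_mod_cast hk
    rw [hm]
    field_simp
    ring
  have h := isIntegral_sin_int_mul_pi_div_div_sin m k
  rwa [Int.cast_natCast, hangle, sin_pi_div_two_sub, hdouble, sin_two_mul,
    div_mul_cancel_right₀ hcos] at h

theorem cos_pi_div_two_mul_eq_zero_or_isIntegral_inv_sqrt_two_mul_sin (hm : m ≠ 0) :
    cos (π / (2 * m)) = 0 ∨ IsIntegral ℤ (√2 * sin (π / (2 * m)))⁻¹ := by
  refine or_iff_not_imp_left.2 fun hcos ↦ ?_
  obtain heven | hodd := m.even_or_odd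
  · exact isIntegral_inv_sqrt_two_mul_sin_pi_div_two_mul_of_even hm heven
  · have hsqrt : IsIntegral ℤ √2 := .of_pow two_pos <| by
      rw [sq_sqrt zero_le_two]
      exact isIntegral_algebraMap (x := (2 : ℤ))
    have heq : (√2 * sin (π / (2 * m)))⁻¹ = √2 * (2 * sin (π / (2 * m)))⁻¹ := by
      rw [mul_inv, mul_inv, ← mul_assoc, ← div_eq_mul_inv √2, sqrt_div_self', one_div]
    rw [heq]
    exact hsqrt.mul (isIntegral_inv_two_mul_sin_pi_div_two_mul_of_odd hodd hcos)

end Trigonometry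

theorem cycProd_two_smul_projected_isIntegral_general {I J : Type*}
    (G : Matrix I I ℝ) (o : I) (e : J → I) (hsymm : ∀ j, G (e j) o = G o (e j))
    (m : J → ℕ) (hm : ∀ j, 1 ≤ m j)
    (hcos : ∀ j, G o (e j) = -Real.cos (Real.pi / (2 * m j)))
    (hint : ∀ x ∈ cycProd ((2 : ℝ) • G), IsIntegral ℤ x) :
    ∀ x ∈ cycProd ((2 : ℝ) • projectedGram G o e), IsIntegral ℤ x := by
  have hm0 (j : J) : m j ≠ 0 := Nat.one_le_iff_ne_zero.1 (hm j)
  exact cycProd_two_smul_projectedGram_subset (O := (integralClosure ℤ ℝ).toSubring) hsymm hcos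
    (fun j ↦ sin_pi_div_two_mul_nonneg (hm0 j))
    (fun j ↦ isIntegral_inv_sin_pi_div_two_mul (hm0 j))
    (fun j ↦ cos_pi_div_two_mul_eq_zero_or_isIntegral_inv_sqrt_two_mul_sin (hm0 j)) hint

/-- Core computation of Theorem 2: Vinberg's integrality condition (V3) descends
to the projected Gram matrix of a facet meeting all its adjacent facets at
dihedral angles of the form `π/(2mᵢ)`. -/
theorem cycProd_two_smul_projected_isIntegral
    (N : ℕ) (hN : 1 ≤ N)
    (G : Matrix (Fin (N + 1)) (Fin (N + 1)) ℝ) (hGsym : G.IsSymm)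
    (hdiag : ∀ i, G i i = 1)
    (m : Fin N → ℕ) (hm : ∀ i, 1 ≤ m i)
    (hg0 : ∀ i : Fin N, G 0 i.succ = -Real.cos (Real.pi / (2 * m i)))
    (hint : ∀ x ∈ cycProd ((2 : ℝ) • G), IsIntegral ℤ x)
    (G' : Matrix (Fin N) (Fin N) ℝ)
    (hG' : ∀ i j : Fin N,
      G' i j = (G i.succ j.succ - G 0 i.succ * G 0 j.succ) /
        Real.sqrt ((1 - (G 0 i.succ) ^ 2) * (1 - (G 0 j.succ) ^ 2))) :
    ∀ x ∈ cycProd ((2 : ℝ) • G'), IsIntegral ℤ x := by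
  obtain rfl : G' = projectedGram G 0 Fin.succ := Matrix.ext hG'
  exact cycProd_two_smul_projected_isIntegral_general G 0 Fin.succ (fun i ↦ hGsym.apply 0 i.succ)
    m hm hg0 hint
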